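/- Let f ∈ ℂ[a₁, b₁, c₁, d₁, …, a₃, b₃, c₃, d₃] be a polynomial in the entries of a triple of 2×2 complex matrices such that for some non-negative integer r one has f(g₂Y₁g₁⁻¹, g₂Y₂g₁⁻¹, g₂Y₃g₁⁻¹) = det(g₁)⁻ʳ · det(g₂)ʳ · f(Y₁, Y₂, Y₃) for all invertible g₁, g₂ ∈ GL₂(ℂ) and all triples (Y₁, Y₂, Y₃). Then f belongs to the ℂ-subalgebra of the polynomial ring generated by the six polynomials D₁, D₂, D₃, P₁₂, P₁₃, P₂₃. (The generation statement used in the proof of Proposition 2.8, i.e., the ring of Θ-semi-invariants is generated by these six elements.) -/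

import Mathlib

open Matrix MvPolynomial

noncomputable section

/-- 2×2 complex matrices. -/
abbrev M2 : Type := Matrix (Fin 2) (Fin 2) ℂ

/-- The polynomial ring in the twelve entries of a triple of 2×2 matrices. -/
abbrev PolyRing : Type := MvPolynomial (Fin 3 × Fin 2 × Fin 2) ℂ

/-- The `i`-th generic 2×2 matrix, whose entries are the corresponding variables. -/
def genMat (i : Fin 3) : Matrix (Fin 2) (Fin 2) PolyRing :=
  fun r c => MvPolynomial.X (i, r, c)

/-- Evaluation of a polynomial in the twelve variables at a triple of matrices. -/
def evalAt (Y : Fin 3 → M2) (f : PolyRing) : ℂ :=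
  MvPolynomial.eval (fun v : Fin 3 × Fin 2 × Fin 2 => Y v.1 v.2.1 v.2.2) f

/-!
A generic triple lies in the `SL₂ × SL₂`-orbit of a triple of the form
`diag(1, d), [[0, s], [t, x]], [[0, a], [b, y]]`, so an invariant is determined by its restriction
to this slice. The restriction is invariant under the torus `(s, t, a, b) ↦ (cs, c⁻¹t, ca, c⁻¹b)`,
hence a polynomial in `d, x, y, st, ab, sb, ta`. It is also invariant under `s ↔ t`, `a ↔ b`,
because a generic triple is equivalent to its transpose. The swap exchanges `sb` and `ta`, whose sum
and product, like `d, x, y, st, ab`, are polynomials in the six basic invariants of the slice; so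
the restriction is one too.
-/

theorem eq_of_eval_eq_of_ne_zero {R σ : Type*} [CommRing R] [IsDomain R] [Infinite R]
    {p p' q : MvPolynomial σ R} (hq : q ≠ 0)
    (h : ∀ x, eval x q ≠ 0 → eval x p = eval x p') : p = p' := by
  refine mul_left_cancel₀ hq (MvPolynomial.funext fun x => ?_)
  by_cases hx : eval x q = 0
  · simp [hx]
  · simp [h x hx]

theorem coeff_aeval_C_mul_X {R σ : Type*} [CommSemiring R] (c : σ → R) (p : MvPolynomial σ R)
    (m : σ →₀ ℕ) :
    coeff m (aeval (fun i => C (c i) * X i) p) = m.prod (fun i k => c i ^ k) * coeff m p := by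
  classical
  induction p using MvPolynomial.induction_on' with
  | monomial n a =>
    have h : aeval (fun i => C (c i) * X i) (monomial n a)
        = monomial n (a * n.prod fun i k => c i ^ k) := by
      rw [aeval_monomial, monomial_eq, C_mul, map_finsuppProd C, mul_assoc, ← Finsupp.prod_mul]
      simp only [mul_pow, map_pow, algebraMap_eq]
    rw [h, coeff_monomial, coeff_monomial]
    split_ifs with hnm
    · rw [hnm, mul_comm]
    · rw [mul_zero]
  | add p q hp hq => rw [map_add, coeff_add, coeff_add, hp, hq, mul_add]

theorem exists_ne_zero_zpow_ne_one (K : Type*) [Field K] [Infinite K] {n : ℤ} (hn : n ≠ 0) :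
    ∃ c : K, c ≠ 0 ∧ c ^ n ≠ 1 := by
  classical
  have hpos : 0 < n.natAbs := Int.natAbs_pos.mpr hn
  obtain ⟨c, hc⟩ := Infinite.exists_notMem_finset
    (insert 0 (Polynomial.nthRootsFinset n.natAbs (1 : K)))
  rw [Finset.mem_insert, Polynomial.mem_nthRootsFinset hpos, not_or] at hc
  refine ⟨c, hc.1, fun h => hc.2 ?_⟩
  obtain hn' | hn' := n.natAbs_eq <;> rw [hn'] at h
  · rwa [zpow_natCast] at h
  · rwa [_root_.zpow_neg, zpow_natCast, inv_eq_one] at h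

theorem zpow_weight {K σ : Type*} [Field K] {c : K} (hc : c ≠ 0) (w : σ → ℤ) (m : σ →₀ ℕ) :
    c ^ Finsupp.weight w m = m.prod fun i k => (c ^ w i) ^ k := by
  induction m using Finsupp.induction_linear with
  | zero => simp
  | add m m' hm hm' =>
    classical
    rw [map_add, zpow_add₀ hc, hm, hm', Finsupp.prod_add_index' (fun _ => pow_zero _)
      (fun _ _ _ => pow_add _ _ _)]
  | single i k =>
    rw [Finsupp.weight_single, Finsupp.prod_single_index (by simp), nsmul_eq_mul, mul_comm,
      _root_.zpow_mul, zpow_natCast]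

theorem isWeightedHomogeneous_zero_of_eval_zpow {K σ : Type*} [Field K] [Infinite K]
    (w : σ → ℤ) {p : MvPolynomial σ K}
    (hp : ∀ c : K, c ≠ 0 → ∀ x, eval (fun i => c ^ w i * x i) p = eval x p) :
    IsWeightedHomogeneous w p 0 := by
  intro m hm
  by_contra hweight
  obtain ⟨c, hc, hcw⟩ := exists_ne_zero_zpow_ne_one K hweight
  have hscale : aeval (fun i => C (c ^ w i) * X i) p = p := by
    refine MvPolynomial.funext fun x => ?_
    rw [← hp c hc x, ← aeval_eq_eval, comp_aeval_apply]
    simp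
  have hcoeff := coeff_aeval_C_mul_X (fun i => c ^ w i) p m
  rw [hscale, ← zpow_weight hc, right_eq_mul₀ hm] at hcoeff
  exact hcw hcoeff

theorem pow_mul_pow_mul_pow_mul_pow_mem {M : Type*} [CommMonoid M] {S : Submonoid M}
    {a b c d : M} (hab : a * b ∈ S) (had : a * d ∈ S) (hbc : b * c ∈ S) (hcd : c * d ∈ S)
    {i j k l : ℕ} (h : i + k = j + l) : a ^ i * b ^ j * c ^ k * d ^ l ∈ S := by
  obtain hij | hji := le_total i j
  · obtain ⟨n, rfl⟩ := Nat.exists_eq_add_of_le hij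
    obtain rfl : k = l + n := by omega
    convert mul_mem (mul_mem (pow_mem hab i) (pow_mem hbc n)) (pow_mem hcd l) using 1
    simp only [pow_add, mul_pow]
    ac_rfl
  · obtain ⟨n, rfl⟩ := Nat.exists_eq_add_of_le hji
    obtain rfl : l = k + n := by omega
    convert mul_mem (mul_mem (pow_mem hab j) (pow_mem had n)) (pow_mem hcd k) using 1
    simp only [pow_add, mul_pow]
    ac_rfl

theorem mem_of_mem_adjoin_of_fixed {R A : Type*} [CommRing R] [CommRing A] [IsDomain A]
    [Algebra R A] (S : Subalgebra R A) (σ : A →ₐ[R] A) (hσ : ∀ a ∈ S, σ a = a) {e : A}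
    (he : σ e ≠ e) (hadd : e + σ e ∈ S) (hmul : e * σ e ∈ S) {z : A}
    (hz : z ∈ Algebra.adjoin R (insert e (S : Set A))) (hfix : σ z = z) : z ∈ S := by
  -- `e` is a root of the quadratic `(t - e)(t - σ e)` over `S`, so adjoining it gives `S + S e`.
  obtain ⟨a, ha, b, hb, rfl⟩ : ∃ a ∈ S, ∃ b ∈ S, z = a + b * e := by
    clear hfix
    induction hz using Algebra.adjoin_induction with
    | mem x hx =>
      obtain rfl | hx := hx
      · exact ⟨0, S.zero_mem, 1, S.one_mem, by ring⟩
      · exact ⟨x, hx, 0, S.zero_mem, by ring⟩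
    | algebraMap r => exact ⟨_, S.algebraMap_mem r, 0, S.zero_mem, by ring⟩
    | add x y _ _ hx hy =>
      obtain ⟨a, ha, b, hb, rfl⟩ := hx
      obtain ⟨a', ha', b', hb', rfl⟩ := hy
      exact ⟨a + a', S.add_mem ha ha', b + b', S.add_mem hb hb', by ring⟩
    | mul x y _ _ hx hy =>
      obtain ⟨a, ha, b, hb, rfl⟩ := hx
      obtain ⟨a', ha', b', hb', rfl⟩ := hy
      exact ⟨a * a' - b * b' * (e * σ e),
        S.sub_mem (S.mul_mem ha ha') (S.mul_mem (S.mul_mem hb hb') hmul),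
        a * b' + b * a' + b * b' * (e + σ e),
        S.add_mem (S.add_mem (S.mul_mem ha hb') (S.mul_mem hb ha'))
          (S.mul_mem (S.mul_mem hb hb') hadd), by ring⟩
  have hb0 : b = 0 := by
    rw [map_add, map_mul, hσ a ha, hσ b hb, add_right_inj] at hfix
    by_contra h
    exact he (mul_left_cancel₀ h hfix)
  simpa [hb0] using ha

/-- A triple of `2 × 2` matrices. -/
abbrev MatTriple (R : Type*) : Type _ := Fin 3 → Matrix (Fin 2) (Fin 2) R

namespace MatTriple

variable {K R A : Type*} [Field K] [CommRing R] [CommRing A]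

/-- The polarization of the determinant, which is a quadratic form on `2 × 2` matrices. -/
def polarDet (M N : Matrix (Fin 2) (Fin 2) R) : R := (M + N).det - M.det - N.det

/-- The six basic invariants of a triple, in the order `D₁, D₂, D₃, P₁₂, P₁₃, P₂₃`. -/
def basicInvariants (Y : MatTriple R) : Fin 6 → R :=
  ![(Y 0).det, (Y 1).det, (Y 2).det,
    polarDet (Y 0) (Y 1), polarDet (Y 0) (Y 2), polarDet (Y 1) (Y 2)]

theorem range_basicInvariants (Y : MatTriple R) :
    Set.range (basicInvariants Y) = {(Y 0).det, (Y 1).det, (Y 2).det,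
      polarDet (Y 0) (Y 1), polarDet (Y 0) (Y 2), polarDet (Y 1) (Y 2)} := by
  simp only [basicInvariants, range_cons, range_empty, Set.union_empty, Set.singleton_union]

theorem map_basicInvariants (φ : R →+* A) (Y : MatTriple R) (k : Fin 6) :
    φ (basicInvariants Y k) = basicInvariants (fun i => (Y i).map φ) k := by
  fin_cases k <;> simp [basicInvariants, polarDet, det_fin_two]

/-- The generic triple, whose entries are the twelve variables. -/
def genericTriple (R : Type*) [CommRing R] : MatTriple (MvPolynomial (Fin 3 × Fin 2 × Fin 2) R) :=
  fun i => of fun r c => X (i, r, c)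

/-- The value of a polynomial in the twelve variables at a triple over an `R`-algebra. -/
def evalTriple [Algebra R A] (Y : MatTriple A) :
    MvPolynomial (Fin 3 × Fin 2 × Fin 2) R →ₐ[R] A :=
  aeval fun v => Y v.1 v.2.1 v.2.2

theorem genericTriple_map_evalTriple [Algebra R A] (Y : MatTriple A) (i : Fin 3) :
    (genericTriple R i).map (evalTriple Y) = Y i := by
  ext r c
  simp [genericTriple, evalTriple]

theorem map_evalTriple {B : Type*} [CommRing B] [Algebra R A] [Algebra R B] (φ : A →ₐ[R] B)
    (Y : MatTriple A) (f : MvPolynomial (Fin 3 × Fin 2 × Fin 2) R) :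
    φ (evalTriple Y f) = evalTriple (fun i => (Y i).map φ) f := by
  simp [evalTriple, comp_aeval_apply]

theorem evalTriple_aeval_basicInvariants [Algebra R A] (Y : MatTriple A)
    (G : MvPolynomial (Fin 6) R) :
    evalTriple Y (aeval (basicInvariants (genericTriple R)) G) = aeval (basicInvariants Y) G := by
  rw [comp_aeval_apply]
  congr 2
  funext k
  have h := map_basicInvariants (evalTriple (R := R) Y).toRingHom (genericTriple R) k
  simp only [AlgHom.toRingHom_eq_coe, RingHom.coe_coe, genericTriple_map_evalTriple] at h
  exact h

/-- Two triples are related by matrices `T`, `U` of equal nonzero determinant. Over an algebraically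
closed field this says that they lie in the same `SL₂ × SL₂`-orbit, as a common scalar factor of
`T` and `U` acts trivially. -/
def SameOrbit (Y Z : MatTriple R) : Prop :=
  ∃ T U : Matrix (Fin 2) (Fin 2) R, T.det = U.det ∧ U.det ≠ 0 ∧ ∀ i, Y i * T = U * Z i

theorem SameOrbit.basicInvariants_eq [IsDomain R] {Y Z : MatTriple R} (h : SameOrbit Y Z) :
    basicInvariants Y = basicInvariants Z := by
  obtain ⟨T, U, hTU, hU, hYZ⟩ := h
  have hdet {M N : Matrix (Fin 2) (Fin 2) R} (hMN : M * T = U * N) : M.det = N.det := by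
    have := congrArg det hMN
    rw [det_mul, det_mul, hTU, mul_comm] at this
    exact mul_left_cancel₀ hU this
  have hpolar (i j : Fin 3) : polarDet (Y i) (Y j) = polarDet (Z i) (Z j) := by
    have hadd : (Y i + Y j) * T = U * (Z i + Z j) := by rw [add_mul, mul_add, hYZ, hYZ]
    rw [polarDet, polarDet, hdet hadd, hdet (hYZ i), hdet (hYZ j)]
  simp only [basicInvariants, hdet (hYZ _), hpolar]

/-- Invariance of a polynomial function on triples under `SL₂ × SL₂`, which is all that remains of
`Θ`-semi-invariance when the weight is forgotten. -/
def IsSLInvariant (f : MvPolynomial (Fin 3 × Fin 2 × Fin 2) R) : Prop :=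
  ∀ g₁ g₂ : Matrix (Fin 2) (Fin 2) R, g₁.det = 1 → g₂.det = 1 → ∀ Y : MatTriple R,
    evalTriple (fun i => g₂ * Y i * g₁⁻¹) f = evalTriple Y f

theorem isSLInvariant_of_evalTriple_eq_det_pow_mul {f : MvPolynomial (Fin 3 × Fin 2 × Fin 2) K}
    {r : ℕ} (hf : ∀ g₁ g₂ : Matrix (Fin 2) (Fin 2) K, IsUnit g₁.det → IsUnit g₂.det →
      ∀ Y : MatTriple K, evalTriple (fun i => g₂ * Y i * g₁⁻¹) f =
        g₁.det⁻¹ ^ r * g₂.det ^ r * evalTriple Y f) : IsSLInvariant f := by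
  intro g₁ g₂ h₁ h₂ Y
  have h := hf g₁ g₂ (h₁ ▸ isUnit_one) (h₂ ▸ isUnit_one) Y
  rwa [h₁, h₂, inv_one, one_pow, one_mul, one_mul] at h

theorem IsSLInvariant.evalTriple_eq [IsAlgClosed K]
    {f : MvPolynomial (Fin 3 × Fin 2 × Fin 2) K} (hf : IsSLInvariant f) {Y Z : MatTriple K}
    (h : SameOrbit Y Z) : evalTriple Y f = evalTriple Z f := by
  obtain ⟨T, U, hTU, hU, hYZ⟩ := h
  obtain ⟨c, hc⟩ := IsAlgClosed.exists_pow_nat_eq U.det two_pos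
  have hc0 : c ≠ 0 := by rintro rfl; exact hU (by rw [← hc, zero_pow two_ne_zero])
  have hscale {M : Matrix (Fin 2) (Fin 2) K} (hM : M.det = U.det) : (c⁻¹ • M).det = 1 := by
    rw [det_smul, Fintype.card_fin, hM, ← hc, ← mul_pow, inv_mul_cancel₀ hc0, one_pow]
  have hT : IsUnit (c⁻¹ • T).det := by rw [hscale hTU]; exact isUnit_one
  rw [← hf (c⁻¹ • T) (c⁻¹ • U) (hscale hTU) (hscale rfl) Z]
  congr 2
  funext i
  rw [smul_mul_assoc, ← hYZ, ← mul_smul_comm, mul_nonsing_inv_cancel_right _ _ hT]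

/-- The slice `diag(1, d), [[0, s], [t, x]], [[0, a], [b, y]]`, which meets a generic
`SL₂ × SL₂`-orbit. The parameters `p 0, …, p 6` are `s, t, a, b, d, x, y` in this order. -/
def slice (p : Fin 7 → R) : MatTriple R :=
  ![!![1, 0; 0, p 4], !![0, p 0; p 1, p 5], !![0, p 2; p 3, p 6]]

theorem map_slice (φ : R →+* A) (p : Fin 7 → R) (i : Fin 3) :
    (slice p i).map φ = slice (fun k => φ (p k)) i := by
  fin_cases i <;> ext r c <;> fin_cases r <;> fin_cases c <;> simp [slice]

theorem basicInvariants_slice (p : Fin 7 → R) :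
    basicInvariants (slice p) =
      ![p 4, -(p 0 * p 1), -(p 2 * p 3), p 5, p 6, -(p 0 * p 3 + p 1 * p 2)] := by
  funext k
  fin_cases k <;> simp [basicInvariants, polarDet, slice, det_fin_two] <;> ring

/-- The weights on the slice of the torus of conjugations by `diag(c, 1)`. -/
def sliceWeight : Fin 7 → ℤ := ![1, -1, 1, -1, 0, 0, 0]

theorem sameOrbit_slice_zpow {c : K} (hc : c ≠ 0) (p : Fin 7 → K) :
    SameOrbit (slice fun k => c ^ sliceWeight k * p k) (slice p) := by
  refine ⟨!![c, 0; 0, 1], !![c, 0; 0, 1], rfl, by simpa using hc, fun i => ?_⟩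
  ext r s
  fin_cases i <;> fin_cases r <;> fin_cases s <;> simp [slice, sliceWeight, hc, mul_comm]

/-- The permutation `s ↔ t`, `a ↔ b` of the parameters that transposes the slice. -/
def sliceSwap : Equiv.Perm (Fin 7) := Equiv.swap 0 1 * Equiv.swap 2 3

theorem slice_sliceSwap (p : Fin 7 → R) (i : Fin 3) :
    slice (p ∘ sliceSwap) i = (slice p i)ᵀ := by
  fin_cases i <;> ext r c <;> fin_cases r <;> fin_cases c <;> rfl

theorem sameOrbit_transpose {Y : MatTriple R} {M : Matrix (Fin 2) (Fin 2) R} (hM : M.det ≠ 0)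
    (h : ∀ i, ((Y i)ᵀ * M).IsSymm) : SameOrbit (fun i => (Y i)ᵀ) Y :=
  ⟨M, Mᵀ, (det_transpose M).symm, by rwa [det_transpose],
    fun i => by simpa using (h i).eq.symm⟩

/-- A matrix `M` making the three products `(slice p i)ᵀ * M` symmetric, which is a system of three
linear equations in the four entries of `M`. -/
def sliceSymmetrizer (p : Fin 7 → R) : Matrix (Fin 2) (Fin 2) R :=
  !![p 3 * p 5 - p 1 * p 6, p 4 * (p 1 * p 2 - p 0 * p 3);
    p 1 * p 2 - p 0 * p 3, p 2 * p 5 - p 0 * p 6]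

theorem isSymm_transpose_slice_mul (p : Fin 7 → R) (i : Fin 3) :
    ((slice p i)ᵀ * sliceSymmetrizer p).IsSymm := by
  ext r c
  fin_cases i <;> fin_cases r <;> fin_cases c <;>
    simp [slice, sliceSymmetrizer, mul_apply, Fin.sum_univ_two] <;> ring

/-- The matrix with columns `u` and `v`. -/
def columns (u v : Fin 2 → R) : Matrix (Fin 2) (Fin 2) R := (of ![u, v])ᵀ

theorem mul_columns (M : Matrix (Fin 2) (Fin 2) R) (u v : Fin 2 → R) :
    M * columns u v = columns (M *ᵥ u) (M *ᵥ v) := by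
  ext r c
  fin_cases c <;> rfl

theorem det_columns_mulVec (M : Matrix (Fin 2) (Fin 2) R) (u v : Fin 2 → R) :
    (columns (M *ᵥ u) v).det = (columns u (M.adjugate *ᵥ v)).det := by
  simp only [columns, det_fin_two, transpose_apply, of_apply, cons_val_zero, cons_val_one,
    mulVec, dotProduct, adjugate_fin_two, Fin.sum_univ_two]
  ring

theorem det_columns_swap (u v : Fin 2 → R) : (columns v u).det = -(columns u v).det := by
  simp only [columns, det_fin_two, transpose_apply, of_apply, cons_val_zero, cons_val_one]
  ring

theorem exists_smul_eq_of_det_columns_eq_zero {u v : Fin 2 → K} (hu : u ≠ 0)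
    (h : (columns u v).det = 0) : ∃ c : K, v = c • u := by
  have hdep : ¬LinearIndependent K (columns u v).col := by
    rw [linearIndependent_cols_iff_isUnit, isUnit_iff_isUnit_det, h]
    exact not_isUnit_zero
  have hcol : (columns u v).col = ![u, v] := rfl
  rw [hcol, LinearIndependent.pair_iff' hu] at hdep
  push Not at hdep
  exact hdep.imp fun _ => Eq.symm

theorem exists_columns_eq_mul {v w x : Fin 2 → K} (h : (columns v w).det ≠ 0)
    (hx : (columns w x).det = 0) (y : Fin 2 → K) :
    ∃ a b c : K, columns x y = columns v w * !![0, a; b, c] := by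
  have hw : w ≠ 0 := by
    rintro rfl
    simp [columns, det_fin_two] at h
  obtain ⟨b, rfl⟩ := exists_smul_eq_of_det_columns_eq_zero hw hx
  obtain ⟨z, rfl⟩ : ∃ z, columns v w *ᵥ z = y :=
    ⟨(columns v w)⁻¹ *ᵥ y, by rw [mulVec_mulVec, mul_nonsing_inv _ h.isUnit, one_mulVec]⟩
  have hb : columns v w *ᵥ ![0, b] = b • w := by
    ext i
    simp [columns, mulVec, dotProduct, mul_comm]
  have hz : !![0, z 0; b, z 1] = columns ![0, b] z := by
    ext i j
    fin_cases i <;> fin_cases j <;> rfl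
  exact ⟨z 0, b, z 1, by rw [hz, mul_columns, hb]⟩

theorem det_columns_mulVec_ne_zero {M N : Matrix (Fin 2) (Fin 2) K} {u : Fin 2 → K} {c : K}
    (hu : u ≠ 0) (hN : N *ᵥ u = c • u) (hMN : (M * N - N * M).det ≠ 0) :
    (columns u (M *ᵥ u)).det ≠ 0 := by
  intro h
  obtain ⟨b, hb⟩ := exists_smul_eq_of_det_columns_eq_zero hu h
  refine hMN (exists_mulVec_eq_zero_iff.mp ⟨u, hu, ?_⟩)
  rw [sub_mulVec, ← mulVec_mulVec, ← mulVec_mulVec, hN, hb, mulVec_smul, mulVec_smul, hN, hb,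
    smul_comm, sub_self]

theorem exists_mulVec_eq_smul [IsAlgClosed K] {n : Type*} [Fintype n] [Nonempty n]
    (M : Matrix n n K) : ∃ (c : K) (u : n → K), u ≠ 0 ∧ M *ᵥ u = c • u := by
  classical
  obtain ⟨c, hc⟩ := Module.End.exists_eigenvalue (toLin' M)
  obtain ⟨u, hu⟩ := hc.exists_hasEigenvector
  exact ⟨c, u, hu.2, by simpa using hu.apply_eq_smul⟩

/-- The commutator of `adj(Y₂) Y₁` and `adj(Y₂) Y₃`. Its invertibility is a generic condition which
prevents these two matrices from having a common eigenvector. -/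
def slopeCommutator (Y : MatTriple R) : Matrix (Fin 2) (Fin 2) R :=
  (Y 1).adjugate * Y 0 * ((Y 1).adjugate * Y 2) - (Y 1).adjugate * Y 2 * ((Y 1).adjugate * Y 0)

theorem exists_sameOrbit_slice [IsAlgClosed K] {Y : MatTriple K}
    (hY : (slopeCommutator Y).det ≠ 0) : ∃ p, SameOrbit Y (slice p) := by
  -- As `u` is an eigenvector, `Y₃ u` is a multiple of `Y₂ u`; hence `Y` has slice form with respect
  -- to the bases `u, adj(Y₁) Y₂ u` and `Y₁ u, Y₂ u`.
  obtain ⟨c, u, hu, hc⟩ := exists_mulVec_eq_smul ((Y 1).adjugate * Y 2)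
  set v := Y 0 *ᵥ u
  set w := Y 1 *ᵥ u
  have hvw : (columns v w).det ≠ 0 := by
    rw [det_columns_swap, det_columns_mulVec, mulVec_mulVec, neg_ne_zero]
    exact det_columns_mulVec_ne_zero hu hc hY
  have hY₁ : (columns w (Y 1 *ᵥ u)).det = 0 :=
    det_zero_of_column_eq zero_ne_one fun _ => rfl
  have hY₂ : (columns w (Y 2 *ᵥ u)).det = 0 := by
    rw [det_columns_mulVec, mulVec_mulVec, hc]
    simp only [columns, det_fin_two, transpose_apply, of_apply, cons_val_zero, cons_val_one,
      Pi.smul_apply, smul_eq_mul]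
    ring
  obtain ⟨s, t, x, h₁⟩ := exists_columns_eq_mul hvw hY₁ (Y 1 *ᵥ (Y 0).adjugate *ᵥ w)
  obtain ⟨a, b, y, h₂⟩ := exists_columns_eq_mul hvw hY₂ (Y 2 *ᵥ (Y 0).adjugate *ᵥ w)
  refine ⟨![s, t, a, b, (Y 0).det, x, y], columns u ((Y 0).adjugate *ᵥ w), columns v w,
    (det_columns_mulVec _ _ _).symm, hvw, fun i => ?_⟩
  rw [mul_columns]
  fin_cases i
  · have hw : Y 0 *ᵥ (Y 0).adjugate *ᵥ w = (Y 0).det • w := by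
      rw [mulVec_mulVec, mul_adjugate, smul_mulVec, one_mulVec]
    change columns v (Y 0 *ᵥ (Y 0).adjugate *ᵥ w) = columns v w * slice _ 0
    rw [hw]
    ext r j
    fin_cases j <;> simp [columns, slice, mul_apply, mul_comm]
  · exact h₁
  · exact h₂

/-- The slice with the seven variables as parameters. -/
abbrev genericSlice (R : Type*) [CommRing R] : MatTriple (MvPolynomial (Fin 7) R) := slice X

theorem aeval_evalTriple_genericSlice [Algebra R A] (p : Fin 7 → A)
    (f : MvPolynomial (Fin 3 × Fin 2 × Fin 2) R) :
    aeval p (evalTriple (genericSlice R) f) = evalTriple (slice p) f := by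
  rw [map_evalTriple]
  congr 2
  funext i
  have h := map_slice (aeval (R := R) p).toRingHom X i
  simpa only [AlgHom.toRingHom_eq_coe, RingHom.coe_coe, aeval_X] using h

theorem isWeightedHomogeneous_evalTriple_genericSlice [IsAlgClosed K]
    {f : MvPolynomial (Fin 3 × Fin 2 × Fin 2) K} (hf : IsSLInvariant f) :
    IsWeightedHomogeneous sliceWeight (evalTriple (genericSlice K) f) 0 := by
  have : Infinite K := IsAlgClosed.instInfinite
  refine isWeightedHomogeneous_zero_of_eval_zpow _ fun c hc p => ?_
  rw [← aeval_eq_eval, ← aeval_eq_eval, aeval_evalTriple_genericSlice,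
    aeval_evalTriple_genericSlice]
  exact hf.evalTriple_eq (sameOrbit_slice_zpow hc p)

theorem eval_det_sliceSymmetrizer (p : Fin 7 → R) :
    eval p (sliceSymmetrizer X).det = (sliceSymmetrizer p).det := by
  simp [sliceSymmetrizer, det_fin_two]

theorem det_sliceSymmetrizer_ne_zero [Nontrivial R] :
    (sliceSymmetrizer (X : Fin 7 → MvPolynomial (Fin 7) R)).det ≠ 0 := by
  intro h
  have heval := eval_det_sliceSymmetrizer (R := R) ![0, 0, 1, 1, 0, 1, 0]
  rw [h, map_zero] at heval
  simp [sliceSymmetrizer, det_fin_two] at heval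

theorem rename_sliceSwap_evalTriple_genericSlice [IsAlgClosed K]
    {f : MvPolynomial (Fin 3 × Fin 2 × Fin 2) K} (hf : IsSLInvariant f) :
    rename sliceSwap (evalTriple (genericSlice K) f) = evalTriple (genericSlice K) f := by
  have : Infinite K := IsAlgClosed.instInfinite
  refine eq_of_eval_eq_of_ne_zero det_sliceSymmetrizer_ne_zero fun p hp => ?_
  rw [eval_det_sliceSymmetrizer] at hp
  rw [eval_rename, ← aeval_eq_eval, ← aeval_eq_eval, aeval_evalTriple_genericSlice,
    aeval_evalTriple_genericSlice, funext (slice_sliceSwap p)]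
  exact hf.evalTriple_eq (sameOrbit_transpose hp (isSymm_transpose_slice_mul p))

/-- The algebra generated by the basic invariants of the generic slice. -/
def sliceAlgebra (R : Type*) [CommRing R] : Subalgebra R (MvPolynomial (Fin 7) R) :=
  Algebra.adjoin R (Set.range (basicInvariants (genericSlice R)))

theorem basicInvariants_genericSlice_mem_sliceAlgebra (k : Fin 6) :
    basicInvariants (genericSlice R) k ∈ sliceAlgebra R :=
  Algebra.subset_adjoin (Set.mem_range_self k)

theorem X_mul_X_mem_sliceAlgebra :
    X 0 * X 1 ∈ sliceAlgebra R ∧ X 2 * X 3 ∈ sliceAlgebra R ∧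
      X 0 * X 3 + X 1 * X 2 ∈ sliceAlgebra R := by
  have h := basicInvariants_genericSlice_mem_sliceAlgebra (R := R)
  rw [basicInvariants_slice] at h
  exact ⟨neg_mem_iff.mp (h 1), neg_mem_iff.mp (h 2), neg_mem_iff.mp (h 5)⟩

theorem X_mem_sliceAlgebra :
    X 4 ∈ sliceAlgebra R ∧ X 5 ∈ sliceAlgebra R ∧ X 6 ∈ sliceAlgebra R := by
  have h := basicInvariants_genericSlice_mem_sliceAlgebra (R := R)
  rw [basicInvariants_slice] at h
  exact ⟨h 0, h 3, h 4⟩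

theorem rename_sliceSwap_of_mem_sliceAlgebra {h : MvPolynomial (Fin 7) R}
    (hh : h ∈ sliceAlgebra R) : rename sliceSwap h = h := by
  have hgen : Set.EqOn (rename sliceSwap) (AlgHom.id R (MvPolynomial (Fin 7) R))
      (Set.range (basicInvariants (genericSlice R))) := by
    rintro _ ⟨k, rfl⟩
    rw [basicInvariants_slice]
    fin_cases k <;> simp [sliceSwap, Equiv.swap_apply_def] <;> ring
  exact (AlgHom.eqOn_adjoin_iff.mpr hgen) hh

theorem mem_adjoin_insert_of_isWeightedHomogeneous {h : MvPolynomial (Fin 7) R}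
    (hh : IsWeightedHomogeneous sliceWeight h 0) :
    h ∈ Algebra.adjoin R (insert (X 0 * X 3) (sliceAlgebra R : Set _)) := by
  set B := Algebra.adjoin R (insert (X 0 * X 3) (sliceAlgebra R : Set (MvPolynomial (Fin 7) R)))
  have hSB : sliceAlgebra R ≤ B := fun _ hx => Algebra.subset_adjoin (Set.mem_insert_of_mem _ hx)
  obtain ⟨h01, h23, hadd⟩ := X_mul_X_mem_sliceAlgebra (R := R)
  obtain ⟨h4, h5, h6⟩ := X_mem_sliceAlgebra (R := R)
  have h03 : X 0 * X 3 ∈ B := Algebra.subset_adjoin (Set.mem_insert _ _)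
  have h12 : X 1 * X 2 ∈ B := by simpa using sub_mem (hSB hadd) h03
  rw [h.as_sum]
  refine sum_mem fun m hm => ?_
  have hm0 : m 0 + m 2 = m 1 + m 3 := by
    have := hh (mem_support_iff.mp hm)
    rw [Finsupp.weight_apply, Finsupp.sum_fintype _ _ (by simp)] at this
    simp only [sliceWeight, Int.reduceNeg, Int.nsmul_eq_mul, Fin.sum_univ_seven, cons_val_zero,
      mul_one, cons_val_one, mul_neg, cons_val, mul_zero, add_zero] at this
    omega
  rw [monomial_eq, Finsupp.prod_fintype _ _ (by simp), Fin.prod_univ_seven]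
  refine mul_mem (B.algebraMap_mem _) ?_
  exact mul_mem (mul_mem (mul_mem
    (pow_mul_pow_mul_pow_mul_pow_mem (S := B.toSubmonoid) (hSB h01) h03 h12 (hSB h23) hm0)
    (pow_mem (hSB h4) _)) (pow_mem (hSB h5) _)) (pow_mem (hSB h6) _)

theorem evalTriple_genericSlice_mem_sliceAlgebra [IsAlgClosed K]
    {f : MvPolynomial (Fin 3 × Fin 2 × Fin 2) K} (hf : IsSLInvariant f) :
    evalTriple (genericSlice K) f ∈ sliceAlgebra K := by
  obtain ⟨h01, h23, hadd⟩ := X_mul_X_mem_sliceAlgebra (R := K)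
  have hswap : rename sliceSwap (X 0 * X 3 : MvPolynomial (Fin 7) K) = X 1 * X 2 := by
    rw [map_mul, rename_X, rename_X]
    rfl
  refine mem_of_mem_adjoin_of_fixed _ (rename sliceSwap)
    (fun _ => rename_sliceSwap_of_mem_sliceAlgebra) (e := X 0 * X 3) ?_ ?_ ?_
    (mem_adjoin_insert_of_isWeightedHomogeneous (isWeightedHomogeneous_evalTriple_genericSlice hf))
    (rename_sliceSwap_evalTriple_genericSlice hf)
  · intro h
    have heval := congrArg (eval ![(1 : K), 0, 0, 1, 0, 0, 0]) h
    simp [hswap] at heval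
  · rwa [hswap]
  · rw [hswap, show (X 0 * X 3 * (X 1 * X 2) : MvPolynomial (Fin 7) K) =
      X 0 * X 1 * (X 2 * X 3) by ring]
    exact mul_mem h01 h23

theorem exists_evalTriple_slice_eq [IsAlgClosed K]
    {f : MvPolynomial (Fin 3 × Fin 2 × Fin 2) K} (hf : IsSLInvariant f) :
    ∃ G : MvPolynomial (Fin 6) K, ∀ p : Fin 7 → K,
      evalTriple (slice p) f = aeval (basicInvariants (slice p)) G := by
  have hmem := evalTriple_genericSlice_mem_sliceAlgebra hf
  rw [sliceAlgebra, Algebra.adjoin_range_eq_range_aeval] at hmem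
  obtain ⟨G, hG⟩ := hmem
  refine ⟨G, fun p => ?_⟩
  calc evalTriple (slice p) f = aeval p (evalTriple (genericSlice K) f) :=
        (aeval_evalTriple_genericSlice p f).symm
    _ = aeval p (aeval (basicInvariants (genericSlice K)) G) := congrArg _ hG.symm
    _ = aeval (basicInvariants (slice p)) G := by
      rw [← evalTriple_aeval_basicInvariants, aeval_evalTriple_genericSlice,
        evalTriple_aeval_basicInvariants]

theorem evalTriple_det_slopeCommutator (Y : MatTriple R) :
    evalTriple Y (slopeCommutator (genericTriple R)).det = (slopeCommutator Y).det := by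
  rw [AlgHom.map_det]
  congr 1
  simp only [slopeCommutator, map_sub, map_mul, AlgHom.map_adjugate]
  simp only [AlgHom.mapMatrix_apply, genericTriple_map_evalTriple]

theorem det_slopeCommutator_genericTriple_ne_zero [Nontrivial R] :
    (slopeCommutator (genericTriple R)).det ≠ 0 := by
  intro h
  have heval := evalTriple_det_slopeCommutator (R := R) ![!![0, 1; 0, 0], 1, !![0, 0; 1, 0]]
  rw [h, map_zero] at heval
  simp [slopeCommutator, det_fin_two] at heval

end MatTriple

open MatTriple in
theorem semiInvariants_mem_adjoin_general {K : Type*} [Field K] [IsAlgClosed K]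
    {f : MvPolynomial (Fin 3 × Fin 2 × Fin 2) K} (hf : IsSLInvariant f) :
    f ∈ Algebra.adjoin K (Set.range (basicInvariants (genericTriple K))) := by
  have : Infinite K := IsAlgClosed.instInfinite
  obtain ⟨G, hG⟩ := exists_evalTriple_slice_eq hf
  rw [Algebra.adjoin_range_eq_range_aeval]
  refine ⟨G, Eq.symm (eq_of_eval_eq_of_ne_zero
    (det_slopeCommutator_genericTriple_ne_zero (R := K)) fun x hx => ?_)⟩
  let Y : MatTriple K := fun i => of fun r c => x (i, r, c)
  change evalTriple Y _ ≠ 0 at hx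
  rw [evalTriple_det_slopeCommutator] at hx
  obtain ⟨p, hp⟩ := exists_sameOrbit_slice hx
  calc evalTriple Y f = evalTriple (slice p) f := hf.evalTriple_eq hp
    _ = aeval (basicInvariants (slice p)) G := hG p
    _ = aeval (basicInvariants Y) G := by rw [hp.basicInvariants_eq]
    _ = evalTriple Y (aeval (basicInvariants (genericTriple K)) G) :=
      (evalTriple_aeval_basicInvariants Y G).symm

/-- Any polynomial `f` in the twelve matrix entries which is a semi-invariant of
weight `rΘ` for `Θ = (-1,1)`, i.e. satisfies
`f(g₂Y₁g₁⁻¹, g₂Y₂g₁⁻¹, g₂Y₃g₁⁻¹) = det(g₁)⁻ʳ det(g₂)ʳ f(Y₁,Y₂,Y₃)` for all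
invertible `g₁, g₂` and all triples `Y`, lies in the `ℂ`-subalgebra generated by
the six polynomials `D₁, D₂, D₃, P₁₂, P₁₃, P₂₃`. -/
theorem semiInvariants_mem_adjoin (f : PolyRing) (r : ℕ)
    (hf : ∀ g₁ g₂ : M2, IsUnit g₁.det → IsUnit g₂.det → ∀ Y : Fin 3 → M2,
      evalAt (fun i => g₂ * Y i * g₁⁻¹) f =
        ((g₁.det)⁻¹) ^ r * (g₂.det) ^ r * evalAt Y f) :
    f ∈ Algebra.adjoin ℂ
      ({(genMat 0).det, (genMat 1).det, (genMat 2).det,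
        (genMat 0 + genMat 1).det - (genMat 0).det - (genMat 1).det,
        (genMat 0 + genMat 2).det - (genMat 0).det - (genMat 2).det,
        (genMat 1 + genMat 2).det - (genMat 1).det - (genMat 2).det} :
        Set PolyRing) := by
  have h := semiInvariants_mem_adjoin_general
    (MatTriple.isSLInvariant_of_evalTriple_eq_det_pow_mul hf)
  rwa [MatTriple.range_basicInvariants] at h
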